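/- arXiv:2402.18058 — 3 statements merged into one kernel-verified Lean document; each statement's English description precedes it below -/
import Mathlib

section
/- Let k ≥ 0. Every finitely supported permutation s of {1, 2, ...} admits exactly one permutation t of the form t = (p_1 r_1)(p_2 r_2)···(p_q r_q), a product of q ≥ 0 pairwise disjoint transpositions with p_1 < p_2 < ... < p_q ≤ k < r_1 < r_2 < ... < r_q, such that t⁻¹·s maps the set {1, ..., k} onto itself. Equivalently, every left coset of the setwise stabilizer of {1, ..., k} in the finitary symmetric group contains a unique involution of this form. -/
/-!
A product `t` of disjoint transpositions `(p i, r i)` with all `p i ∈ A` and all `r i ∉ A` maps `A`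
onto `(A \ range p) ∪ range r`. Hence `t⁻¹ * s` preserves `A` exactly when `range p = A \ s(A)` and
`range r = s(A) \ A`. For finite `A` these two sets are equinumerous because `s` is injective, and
each of them has a unique increasing enumeration.
-/

theorem sdiff_sup_eq_iff {α : Type*} [GeneralizedBooleanAlgebra α] {a b x y : α}
    (hx : x ≤ a) (hy : Disjoint a y) : a \ x ⊔ y = b ↔ x = a \ b ∧ y = b \ a := by
  constructor
  · rintro rfl
    constructor
    · rw [sdiff_sup, sdiff_sdiff_right_self, hy.sdiff_eq_left, inf_right_comm, inf_idem,
        inf_eq_right.2 hx]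
    · rw [sup_sdiff, sdiff_eq_bot_iff.2 sdiff_le, bot_sup_eq, hy.sdiff_eq_right]
  · rintro ⟨rfl, rfl⟩
    rw [sdiff_sdiff_right_self, inf_comm, sup_inf_sdiff]

theorem perm_inv_mul_image_eq_iff {α : Type*} (s t : Equiv.Perm α) (A B : Set α) :
    ⇑(t⁻¹ * s) '' A = B ↔ t '' B = s '' A := by
  rw [Equiv.Perm.coe_mul, Set.image_comp, eq_comm (a := t '' B)]
  exact (t.eq_image_iff_symm_image_eq _ _).symm

section SwapProd

variable {α : Type*} [DecidableEq α] {q : ℕ} {p r : Fin q → α}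

/-- The product of transpositions `(p 0, r 0) * (p 1, r 1) * ⋯ * (p (q - 1), r (q - 1))`, the form
of the coset representatives. It is encoded as a list product because transpositions with common
points need not commute. -/
def swapProd (p r : Fin q → α) : Equiv.Perm α :=
  (List.ofFn fun i => Equiv.swap (p i) (r i)).prod

theorem swapProd_succ (p r : Fin (q + 1) → α) :
    swapProd p r = Equiv.swap (p 0) (r 0) * swapProd (Fin.tail p) (Fin.tail r) := by
  rw [swapProd, List.ofFn_succ, List.prod_cons]
  rfl

theorem swapProd_apply_of_notMem_range {x : α} (hp : x ∉ Set.range p) (hr : x ∉ Set.range r) :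
    swapProd p r x = x := by
  induction q with
  | zero => rfl
  | succ n ih =>
    have htail : swapProd (Fin.tail p) (Fin.tail r) x = x :=
      ih (fun ⟨i, hi⟩ => hp ⟨i.succ, hi⟩) (fun ⟨i, hi⟩ => hr ⟨i.succ, hi⟩)
    rw [swapProd_succ, Equiv.Perm.mul_apply, htail]
    exact Equiv.swap_apply_of_ne_of_ne (fun h => hp ⟨0, h.symm⟩) (fun h => hr ⟨0, h.symm⟩)

theorem swapProd_apply_left (hp : Function.Injective p) (hr : Function.Injective r)
    (hpr : ∀ i j, p i ≠ r j) (i : Fin q) : swapProd p r (p i) = r i := by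
  induction q with
  | zero => exact i.elim0
  | succ n ih =>
    rw [swapProd_succ, Equiv.Perm.mul_apply]
    cases i using Fin.cases with
    | zero =>
      have htail : swapProd (Fin.tail p) (Fin.tail r) (p 0) = p 0 :=
        swapProd_apply_of_notMem_range (fun ⟨j, hj⟩ => j.succ_ne_zero (hp hj))
          (fun ⟨j, hj⟩ => hpr 0 j.succ hj.symm)
      rw [htail, Equiv.swap_apply_left]
    | succ j =>
      have htail : swapProd (Fin.tail p) (Fin.tail r) (p j.succ) = r j.succ :=
        ih (hp.comp (Fin.succ_injective n)) (hr.comp (Fin.succ_injective n))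
          (fun a b => hpr a.succ b.succ) j
      rw [htail]
      exact Equiv.swap_apply_of_ne_of_ne (hpr 0 j.succ).symm (hr.ne j.succ_ne_zero)

theorem image_swapProd {A : Set α} (hp : Function.Injective p) (hr : Function.Injective r)
    (hpA : ∀ i, p i ∈ A) (hrA : ∀ i, r i ∉ A) :
    swapProd p r '' A = A \ Set.range p ∪ Set.range r := by
  have hfix : swapProd p r '' (A \ Set.range p) = A \ Set.range p :=
    (Set.image_congr fun x hx => swapProd_apply_of_notMem_range hx.2
      fun ⟨i, hi⟩ => hrA i (hi ▸ hx.1)).trans (Set.image_id' _)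
  have hmove : swapProd p r '' Set.range p = Set.range r := by
    rw [← Set.range_comp]
    exact congrArg Set.range
      (funext (swapProd_apply_left hp hr fun i j h => hrA j (h ▸ hpA i)))
  calc swapProd p r '' A
      = swapProd p r '' (A \ Set.range p ∪ Set.range p) := by
        rw [Set.sdiff_union_of_subset (Set.range_subset_iff.2 hpA)]
    _ = A \ Set.range p ∪ Set.range r := by rw [Set.image_union, hfix, hmove]

theorem swapProd_inv_mul_image_eq_iff {A : Set α} (hp : Function.Injective p)
    (hr : Function.Injective r) (hpA : ∀ i, p i ∈ A) (hrA : ∀ i, r i ∉ A) (s : Equiv.Perm α) :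
    ⇑((swapProd p r)⁻¹ * s) '' A = A ↔
      Set.range p = A \ s '' A ∧ Set.range r = s '' A \ A := by
  have hrange : Disjoint A (Set.range r) :=
    Set.disjoint_right.2 (Set.forall_mem_range.2 hrA)
  rw [perm_inv_mul_image_eq_iff, image_swapProd hp hr hpA hrA]
  exact sdiff_sup_eq_iff (Set.range_subset_iff.2 hpA) hrange

end SwapProd

theorem swapProd_eq_of_range_eq {α : Type*} [LinearOrder α] {m n : ℕ} {p r : Fin m → α}
    {p' r' : Fin n → α} (hp : StrictMono p) (hr : StrictMono r) (hp' : StrictMono p')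
    (hr' : StrictMono r') (hpp' : Set.range p = Set.range p')
    (hrr' : Set.range r = Set.range r') : swapProd p r = swapProd p' r' := by
  obtain rfl : m = n := by
    simpa [Set.ncard_range_of_injective, hp.injective, hp'.injective] using
      congrArg Set.ncard hpp'
  rw [(hp.range_inj hp').1 hpp', (hr.range_inj hr').1 hrr']

theorem exists_strictMono_range_eq {α : Type*} [LinearOrder α] {X Y : Finset α}
    (h : X.card = Y.card) :
    ∃ (q : ℕ) (p r : Fin q → α), StrictMono p ∧ StrictMono r ∧ Set.range p = X ∧ Set.range r = Y :=
  ⟨X.card, X.orderEmbOfFin rfl, Y.orderEmbOfFin h.symm, OrderEmbedding.strictMono _,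
    OrderEmbedding.strictMono _, X.range_orderEmbOfFin rfl, Y.range_orderEmbOfFin h.symm⟩

theorem stmt0_general {α : Type*} [LinearOrder α] (A : Finset α) (s : Equiv.Perm α) :
    ∃! t : Equiv.Perm α,
      (∃ (q : ℕ) (p r : Fin q → α),
        StrictMono p ∧ StrictMono r ∧ (∀ i, p i ∈ A) ∧ (∀ i, r i ∉ A) ∧ t = swapProd p r) ∧
      ⇑(t⁻¹ * s) '' A = A := by
  refine existsUnique_of_exists_of_unique ?existence ?uniqueness
  case existence =>
    have hcard : (A \ A.image s).card = (A.image s \ A).card :=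
      Finset.card_sdiff_comm (Finset.card_image_of_injective A s.injective).symm
    obtain ⟨q, p, r, hp, hr, hpX, hrY⟩ := exists_strictMono_range_eq hcard
    have hpA (i : Fin q) : p i ∈ A :=
      (Finset.mem_sdiff.1 (Finset.mem_coe.1 (hpX ▸ Set.mem_range_self i))).1
    have hrA (i : Fin q) : r i ∉ A :=
      (Finset.mem_sdiff.1 (Finset.mem_coe.1 (hrY ▸ Set.mem_range_self i))).2
    rw [Finset.coe_sdiff, Finset.coe_image] at hpX hrY
    exact ⟨_, ⟨q, p, r, hp, hr, hpA, hrA, rfl⟩,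
      (swapProd_inv_mul_image_eq_iff hp.injective hr.injective hpA hrA s).2 ⟨hpX, hrY⟩⟩
  case uniqueness =>
    rintro _ _ ⟨⟨m, p, r, hp, hr, hpA, hrA, rfl⟩, h⟩ ⟨⟨n, p', r', hp', hr', hpA', hrA', rfl⟩, h'⟩
    obtain ⟨hpX, hrY⟩ :=
      (swapProd_inv_mul_image_eq_iff hp.injective hr.injective hpA hrA s).1 h
    obtain ⟨hpX', hrY'⟩ :=
      (swapProd_inv_mul_image_eq_iff hp'.injective hr'.injective hpA' hrA' s).1 h'
    exact swapProd_eq_of_range_eq hp hr hp' hr' (hpX.trans hpX'.symm) (hrY.trans hrY'.symm)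

/-!
STATEMENT 0.
`S∞` is modeled as the finitely supported permutations of `ℕ` (0-based, so the set
`{1, ..., k}` of the paper becomes `{i | i < k}` and `{k+1, k+2, ...}` becomes `{i | k ≤ i}`).
Every finitely supported permutation `s` admits exactly one permutation `t` that is a product
of pairwise disjoint transpositions `(p i, r i)` with `p` strictly increasing inside
`{i | i < k}` and `r` strictly increasing inside `{i | k ≤ i}`, such that `t⁻¹ * s` maps
`{i | i < k}` onto itself.
-/
theorem stmt0 (k : ℕ) (s : Equiv.Perm ℕ) (hs : {i | s i ≠ i}.Finite) :
    ∃! t : Equiv.Perm ℕ,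
      (∃ (q : ℕ) (p r : Fin q → ℕ),
        StrictMono p ∧ StrictMono r ∧ (∀ i, p i < k) ∧ (∀ i, k ≤ r i) ∧
        t = (List.ofFn fun i => Equiv.swap (p i) (r i)).prod) ∧
      ⇑(t⁻¹ * s) '' {i | i < k} = {i | i < k} := by
  simpa [swapProd, ← Set.Iio_def] using stmt0_general (Finset.range k) s
end

section
/- Let k ≥ 0 and let c be a cycle in S∞ (a finitely supported permutation with exactly one orbit of size greater than 1) which does not map {1, ..., k} onto itself. Then there exists a permutation ĉ that is a product of pairwise disjoint transpositions, each of which exchanges a point of supp(c) ∩ {k+1, k+2, ...} with a point of supp(c) ∩ {1, ..., k}, such that ĉ·c maps {1, ..., k} onto itself (i.e., ĉ·c lies in the Young subgroup S_k·S_{k∞}). -/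
/-!
If `s` meets the support of `c` in a finite set, then `c` carries as many points out of `s` as into
`s`: the sets `s \ c '' s` and `c '' s \ s` lie in the support of `c`, where `s` and `c '' s` have
finite traces of equal size. Pair the points of the two differences off arbitrarily; the product of
the corresponding transpositions carries `c '' s` back to `s`.
-/

section

variable {α : Type*}

theorem exists_injective_range_eq_of_encard_eq {s t : Set α} (hs : s.Finite)
    (h : s.encard = t.encard) :
    ∃ (q : ℕ) (p r : Fin q → α), Function.Injective p ∧ Function.Injective r ∧
      Set.range p = s ∧ Set.range r = t := by
  have ht : t.Finite := Set.encard_lt_top_iff.mp (h ▸ hs.encard_lt_top)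
  obtain ⟨m, p, hp, rfl⟩ := hs.fin_param
  obtain ⟨n, r, hr, rfl⟩ := ht.fin_param
  obtain rfl : m = n := by
    simpa [← Set.image_univ, hp.encard_image, hr.encard_image] using h
  exact ⟨m, p, r, hp, hr, rfl, rfl⟩

theorem image_prod_ofFn_swap [DecidableEq α] {q : ℕ} {p r : Fin q → α}
    (hp : Function.Injective p) (hr : Function.Injective r) {t : Set α}
    (hpt : ∀ i, p i ∉ t) (hrt : ∀ i, r i ∈ t) :
    ⇑(List.ofFn fun i => Equiv.swap (p i) (r i)).prod '' t =
      t \ Set.range r ∪ Set.range p := by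
  induction q with
  | zero => simp
  | succ q ih =>
    cases p using Fin.consCases with | _ a p
    cases r using Fin.consCases with | _ b r
    obtain ⟨ha_range, hp⟩ := Fin.cons_injective_iff.mp hp
    obtain ⟨hb_range, hr⟩ := Fin.cons_injective_iff.mp hr
    simp only [Fin.forall_fin_succ, Fin.cons_zero, Fin.cons_succ] at hpt hrt
    have image_tail := ih hp hr hpt.2 hrt.2
    have hb_mem : b ∈ t \ Set.range r ∪ Set.range p := Or.inl ⟨hrt.1, hb_range⟩
    have ha_notMem : a ∉ t \ Set.range r ∪ Set.range p := by
      rintro (ha | ha)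
      exacts [hpt.1 ha.1, ha_range ha]
    have hb_notMem : b ∉ insert a (Set.range p) := by
      rintro (rfl | ⟨i, rfl⟩)
      exacts [hpt.1 hrt.1, hpt.2 i hrt.1]
    simp only [List.ofFn_succ, Fin.cons_zero, Fin.cons_succ, List.prod_cons,
      Equiv.Perm.coe_mul, Set.image_comp, Fin.range_cons]
    rw [image_tail, Equiv.swap_comm, Equiv.image_swap_of_mem_of_notMem hb_mem ha_notMem,
      ← Set.union_insert, Set.union_sdiff_distrib, Set.sdiff_singleton_eq_self hb_notMem,
      Set.sdiff_sdiff, Set.union_singleton]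

theorem exists_swaps_image_eq [DecidableEq α] {s t : Set α} (hfin : (s \ t).Finite)
    (hcard : (s \ t).encard = (t \ s).encard) :
    ∃ (q : ℕ) (p r : Fin q → α), Function.Injective p ∧ Function.Injective r ∧
      (∀ i, p i ∈ s \ t) ∧ (∀ i, r i ∈ t \ s) ∧
      ⇑(List.ofFn fun i => Equiv.swap (p i) (r i)).prod '' t = s := by
  obtain ⟨q, p, r, hp, hr, hps, hrt⟩ := exists_injective_range_eq_of_encard_eq hfin hcard
  have p_mem (i : Fin q) : p i ∈ s \ t := hps ▸ Set.mem_range_self i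
  have r_mem (i : Fin q) : r i ∈ t \ s := hrt ▸ Set.mem_range_self i
  refine ⟨q, p, r, hp, hr, p_mem, r_mem, ?_⟩
  rw [image_prod_ofFn_swap hp hr (fun i => (p_mem i).2) (fun i => (r_mem i).1), hps, hrt,
    Set.sdiff_sdiff_right_self, Set.inter_comm, Set.inter_union_sdiff]

theorem apply_ne_of_mem_sdiff_image {f : α → α} {s : Set α} {x : α} (hx : x ∈ s \ f '' s) :
    f x ≠ x :=
  fun hfx => hx.2 ⟨x, hx.1, hfx⟩

theorem apply_ne_of_mem_image_sdiff {f : α → α} (hf : Function.Injective f) {s : Set α} {x : α}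
    (hx : x ∈ f '' s \ s) : f x ≠ x := by
  obtain ⟨⟨y, hy, rfl⟩, hys⟩ := hx
  intro hfx
  exact hys ((hf hfx).symm ▸ hy)

theorem image_inter_support (c : Equiv.Perm α) (s : Set α) :
    c '' (s ∩ {x | c x ≠ x}) = c '' s ∩ {x | c x ≠ x} := by
  have preimage_support : c ⁻¹' {x | c x ≠ x} = {x | c x ≠ x} :=
    Set.ext fun _ => c.injective.ne_iff
  simpa only [preimage_support] using Set.image_inter_preimage c s {x | c x ≠ x}

theorem encard_sdiff_image_eq_encard_image_sdiff (c : Equiv.Perm α) {s : Set α}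
    (hs : (s ∩ {x | c x ≠ x}).Finite) : (s \ c '' s).encard = (c '' s \ s).encard := by
  have sdiff_image : s \ c '' s = (s ∩ {x | c x ≠ x}) \ c '' (s ∩ {x | c x ≠ x}) := by
    rw [image_inter_support, ← Set.inter_sdiff_distrib_right, eq_comm, Set.inter_eq_left]
    exact fun x => apply_ne_of_mem_sdiff_image
  have image_sdiff : c '' s \ s = c '' (s ∩ {x | c x ≠ x}) \ (s ∩ {x | c x ≠ x}) := by
    rw [image_inter_support, ← Set.inter_sdiff_distrib_right, eq_comm, Set.inter_eq_left]
    exact fun x => apply_ne_of_mem_image_sdiff c.injective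
  rw [sdiff_image, image_sdiff,
    ← Set.encard_eq_encard_iff_encard_sdiff_eq_encard_sdiff (hs.inter_of_left _),
    c.injective.encard_image]

theorem stmt1_general [DecidableEq α] (c : Equiv.Perm α) {s : Set α}
    (hs : (s ∩ {x | c x ≠ x}).Finite) :
    ∃ (q : ℕ) (p r : Fin q → α),
      Function.Injective p ∧ Function.Injective r ∧
      (∀ i, p i ∈ s ∧ c (p i) ≠ p i) ∧
      (∀ i, r i ∉ s ∧ c (r i) ≠ r i) ∧
      ⇑((List.ofFn fun i => Equiv.swap (p i) (r i)).prod * c) '' s = s := by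
  have hfin : (s \ c '' s).Finite :=
    hs.subset fun _ hx => ⟨hx.1, apply_ne_of_mem_sdiff_image hx⟩
  obtain ⟨q, p, r, hp, hr, hps, hrs, himage⟩ :=
    exists_swaps_image_eq hfin (encard_sdiff_image_eq_encard_image_sdiff c hs)
  refine ⟨q, p, r, hp, hr, fun i => ⟨(hps i).1, apply_ne_of_mem_sdiff_image (hps i)⟩,
    fun i => ⟨(hrs i).2, apply_ne_of_mem_image_sdiff c.injective (hrs i)⟩, ?_⟩
  rw [Equiv.Perm.coe_mul, Set.image_comp, himage]

end

/-!
STATEMENT 1.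
`S∞` is modeled as the finitely supported permutations of `ℕ` (0-based, so the set
`{1, ..., k}` of the paper becomes `{i | i < k}` and `{k+1, k+2, ...}` becomes `{i | k ≤ i}`).
For a finitely supported cycle `c` not mapping `{i | i < k}` onto itself there is a product
`ĉ` of pairwise disjoint transpositions, each exchanging a point of `supp c ∩ {i | k ≤ i}`
with a point of `supp c ∩ {i | i < k}`, such that `ĉ * c` maps `{i | i < k}` onto itself.
-/
theorem stmt1 (k : ℕ) (c : Equiv.Perm ℕ) (hfin : {i | c i ≠ i}.Finite)
    (hcyc : c.IsCycle) (hk : ⇑c '' {i | i < k} ≠ {i | i < k}) :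
    ∃ (q : ℕ) (p r : Fin q → ℕ),
      Function.Injective p ∧ Function.Injective r ∧
      (∀ i, p i < k ∧ c (p i) ≠ p i) ∧
      (∀ i, k ≤ r i ∧ c (r i) ≠ r i) ∧
      ⇑((List.ofFn fun i => Equiv.swap (p i) (r i)).prod * c) '' {i | i < k}
        = {i | i < k} := by
  simpa only [Set.mem_ofPred_eq, not_lt] using
    stmt1_general c (s := {i | i < k}) (hfin.inter_of_right _)
end

section
/- Let p, q be nonnegative real numbers with p + q = 1, let ν be the probability measure on {0, 1} with ν({0}) = p and ν({1}) = q, and let μ be the infinite product measure of countably many copies of ν on X = {0, 1}^ℕ. Then for every n, ∫_X (−1)^{x_n}·(−1)^{x_{n+1}} dμ(x) − ∫_X 1 dμ(x) = (p − q)² − 1. (This is the matrix-coefficient identity (Π(1^(n)) Π((n n+1)) Π(1^(n)) 𝟙, 𝟙) − (Π((n n+1)) 𝟙, 𝟙) = (p − q)² − 1 of Example 3 of the paper, where Π is the natural representation of Z_2 wr S∞ on L²(X, μ) and 𝟙 is the constant function 1; it shows Π is not stable.) -/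
open MeasureTheory

/-!
A measure on a product of countable discrete spaces is determined by its values on cylinders, so
`μ` is a product of Bernoulli measures. The functions `x ↦ (-1)^{x_i}` of distinct coordinates are
then independent with mean `p - q`, so the product over a finite set `s` of coordinates has integral
`(p - q)^|s|`; the two integrals of the theorem are the cases `s = {n, n + 1}` and `s = ∅`.
-/

section InfinitePi

variable {ι : Type*} {X : ι → Type*} [∀ i, MeasurableSpace (X i)]
  {ν : ∀ i, Measure (X i)} [∀ i, IsProbabilityMeasure (ν i)]

theorem eq_infinitePi_of_cylinder_singleton
    [∀ i, Countable (X i)] [∀ i, MeasurableSingletonClass (X i)] {μ : Measure (∀ i, X i)}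
    (hμ : ∀ (s : Finset ι) (v : ∀ i, X i), μ {x | ∀ i ∈ s, x i = v i} = ∏ i ∈ s, ν i {v i}) :
    μ = Measure.infinitePi ν := by
  refine IsProjectiveLimit.unique (fun s ↦ Measure.ext_of_singleton fun w ↦ ?_)
    (Measure.isProjectiveLimit_infinitePi ν)
  have : ∀ i, Nonempty (X i) := fun i ↦ nonempty_of_isProbabilityMeasure (ν i)
  obtain ⟨v, rfl⟩ : ∃ v : ∀ i, X i, s.restrict v = w := Subtype.exists_pi_extension w
  have preimage_restrict_singleton :
      s.restrict ⁻¹' {s.restrict v} = {x | ∀ i ∈ s, x i = v i} := by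
    ext x
    simp [funext_iff]
  rw [Measure.map_apply (Finset.measurable_restrict s) (measurableSet_singleton _),
    preimage_restrict_singleton, hμ, Measure.pi_singleton]
  exact (Finset.prod_coe_sort s fun i ↦ ν i {v i}).symm

theorem integral_finset_prod_infinitePi {𝕜 : Type*} [RCLike 𝕜] (s : Finset ι) {f : ∀ i, X i → 𝕜}
    (hf : ∀ i ∈ s, AEStronglyMeasurable (f i) (ν i)) :
    ∫ x, ∏ i ∈ s, f i (x i) ∂Measure.infinitePi ν = ∏ i ∈ s, ∫ a, f i a ∂ν i := by
  have hprod : AEStronglyMeasurable (fun y : ∀ i : s, X i ↦ ∏ i : s, f i (y i))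
      (Measure.pi fun i : s ↦ ν i) :=
    Finset.aestronglyMeasurable_fun_prod _ fun i _ ↦
      (hf i i.2).comp_quasiMeasurePreserving (Measure.quasiMeasurePreserving_eval _ i)
  calc ∫ x, ∏ i ∈ s, f i (x i) ∂Measure.infinitePi ν
      = ∫ x, ∏ i : s, f i (s.restrict x i) ∂Measure.infinitePi ν := by
        simp only [Finset.restrict, Finset.prod_coe_sort s fun i ↦ f i (_ : X i)]
    _ = ∫ y, ∏ i : s, f i (y i) ∂Measure.pi fun i : s ↦ ν i := by
        rw [← Measure.infinitePi_map_restrict] at hprod ⊢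
        exact (integral_map (Finset.measurable_restrict s).aemeasurable hprod).symm
    _ = ∏ i : s, ∫ a, f i a ∂ν i := integral_fintype_prod_eq_prod _
    _ = ∏ i ∈ s, ∫ a, f i a ∂ν i := Finset.prod_coe_sort s fun i ↦ ∫ a, f i a ∂ν i

end InfinitePi

section Bernoulli

open unitInterval
open scoped ProbabilityTheory

theorem bernoulliMeasure_true_false_singleton (r : I) (b : Bool) :
    Ber(true, false, r) {b} = ENNReal.ofReal (if b then r else 1 - r) := by
  rw [← ofReal_measureReal]
  cases b <;> simp

theorem integral_sign_bernoulliMeasure (r : I) :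
    ∫ b, (if b then (-1 : ℝ) else 1) ∂Ber(true, false, r) = 1 - 2 * r := by
  rw [ProbabilityTheory.integral_bernoulliMeasure]
  simp only [smul_eq_mul, if_true, Bool.false_eq_true, if_false]
  ring

theorem stmt6_general {ι : Type*} (p q : ℝ) (hp : 0 ≤ p) (hq : 0 ≤ q) (hpq : p + q = 1)
    (μ : Measure (ι → Bool))
    (hμ : ∀ (F : Finset ι) (v : ι → Bool),
      μ {x | ∀ i ∈ F, x i = v i} = ∏ i ∈ F, ENNReal.ofReal (if v i then q else p))
    (s : Finset ι) :
    ∫ x, ∏ i ∈ s, (if x i then (-1 : ℝ) else 1) ∂μ = (p - q) ^ s.card := by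
  obtain rfl : p = 1 - q := by linarith
  let r : I := ⟨q, hq, by linarith⟩
  have hμ_prod : μ = Measure.infinitePi fun _ ↦ Ber(true, false, r) :=
    eq_infinitePi_of_cylinder_singleton fun F v ↦ by
      simp only [hμ, bernoulliMeasure_true_false_singleton, r]
  have hsign : ∫ b, (if b then (-1 : ℝ) else 1) ∂Ber(true, false, r) = 1 - q - q := by
    rw [integral_sign_bernoulliMeasure]
    ring
  calc ∫ x, ∏ i ∈ s, (if x i then (-1 : ℝ) else 1) ∂μ
      = ∏ _i ∈ s, ∫ b, (if b then (-1 : ℝ) else 1) ∂Ber(true, false, r) := by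
        rw [hμ_prod]
        exact integral_finset_prod_infinitePi s (f := fun _ (b : Bool) ↦ if b then -1 else 1)
          fun _ _ ↦ .of_discrete
    _ = (1 - q - q) ^ s.card := by rw [hsign, Finset.prod_const]

end Bernoulli

/-!
STATEMENT 6.
The two-point space `{0, 1}` is modeled by `Bool` (`false ↔ 0`, `true ↔ 1`), so
`(-1)^{x_n}` becomes `if x n then -1 else 1`, and `ν({0}) = p`, `ν({1}) = q`.
The infinite product measure `μ = ν^ℕ` on `X = Bool^ℕ` is characterized by its values on
cylinder sets: `μ {x | ∀ i ∈ F, x i = v i} = ∏ i ∈ F, ν({v i})` for every finite `F ⊆ ℕ`.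
The claim is the matrix-coefficient identity
`∫ (-1)^{x_n} (-1)^{x_{n+1}} dμ − ∫ 1 dμ = (p − q)² − 1` of Example 3.
-/
theorem stmt6 (p q : ℝ) (hp : 0 ≤ p) (hq : 0 ≤ q) (hpq : p + q = 1)
    (μ : Measure (ℕ → Bool))
    (hμ : ∀ (F : Finset ℕ) (v : ℕ → Bool),
      μ {x | ∀ i ∈ F, x i = v i} = ∏ i ∈ F, ENNReal.ofReal (if v i then q else p))
    (n : ℕ) :
    (∫ x, (if x n then (-1 : ℝ) else 1) * (if x (n + 1) then (-1 : ℝ) else 1) ∂μ)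
      - (∫ _x, (1 : ℝ) ∂μ) = (p - q) ^ 2 - 1 := by
  simpa [Finset.prod_pair] using congrArg₂ (· - ·)
    (stmt6_general p q hp hq hpq μ hμ {n, n + 1}) (stmt6_general p q hp hq hpq μ hμ ∅)
end
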